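/- Let A ∈ ℝ^{n×n} and B ∈ ℝ^{n×m} be such that the pair (A, B) is controllable, i.e. the n × (nm) controllability matrix [B, AB, A²B, …, A^{n−1}B] has rank n, and let Q ∈ ℝ^{n×n} and R ∈ ℝ^{m×m} be symmetric positive definite. Then there exists a symmetric positive definite matrix P ∈ ℝ^{n×n} satisfying the Algebraic Riccati Equation Q = P B R⁻¹ Bᵀ P − Aᵀ P − P A. -/

import Mathlib

open Matrix

noncomputable section

/-- The controllability matrix `[B, AB, A²B, …, A^{n−1}B]` of the pair `(A, B)`,
with columns indexed by `Fin n × Fin m`. -/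
def ctrbMatrix {n m : ℕ} (A : Matrix (Fin n) (Fin n) ℝ) (B : Matrix (Fin n) (Fin m) ℝ) :
    Matrix (Fin n) (Fin n × Fin m) ℝ :=
  Matrix.of fun i p => (A ^ (p.1 : ℕ) * B) i p.2

/-!
Call a positive semidefinite `P` a supersolution if its Riccati residual is positive semidefinite.
Controllability provides a stabilizing feedback `K` (Bass' construction: solve a Lyapunov equation
for the shifted matrix `A + c`) together with a quadratic Lyapunov function for the closed loop; by
completing the square, a large multiple of that function is a supersolution. At a supersolution the
closed-loop Lyapunov operator is positive, so the Newton step `P ↦ P - D` is defined, decreases `P`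
and yields another supersolution. Supersolutions of bounded trace form a compact set, and at one of
least trace the Newton step must vanish, which forces the residual to be zero.
-/

section

open scoped ComplexOrder

variable {𝕜 n m : Type*} [RCLike 𝕜] [Fintype n] [Fintype m]

/-- The Lyapunov operator `X ↦ Fᴴ X + X F` of `F`, which differentiates the quadratic form of `X`
along `x' = F x`. It is taken to be `ℝ`-linear because Hermitian matrices are only a real
subspace. -/
def lyapunov (F : Matrix n n 𝕜) : Matrix n n 𝕜 →ₗ[ℝ] Matrix n n 𝕜 :=
  LinearMap.mulLeft ℝ Fᴴ + LinearMap.mulRight ℝ F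

theorem lyapunov_apply (F X : Matrix n n 𝕜) : lyapunov F X = Fᴴ * X + X * F :=
  rfl

theorem isHermitian_lyapunov (F : Matrix n n 𝕜) {X : Matrix n n 𝕜} (hX : X.IsHermitian) :
    (lyapunov F X).IsHermitian := by
  rw [IsHermitian, lyapunov_apply, conjTranspose_add, conjTranspose_mul, conjTranspose_mul,
    conjTranspose_conjTranspose, hX.eq, add_comm]

theorem conjTranspose_mul_lyapunov_mul [DecidableEq n] {C : Matrix n n 𝕜} (hC : IsUnit C)
    (F X : Matrix n n 𝕜) :
    Cᴴ * lyapunov F X * C = lyapunov (C⁻¹ * F * C) (Cᴴ * X * C) := by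
  have hdet : IsUnit C.det := (isUnit_iff_isUnit_det C).mp hC
  have hCC : C * C⁻¹ = 1 := mul_nonsing_inv C hdet
  have hCC' : C⁻¹ᴴ * Cᴴ = 1 := by rw [← conjTranspose_mul, hCC, conjTranspose_one]
  calc Cᴴ * lyapunov F X * C
      = Cᴴ * Fᴴ * (C⁻¹ᴴ * Cᴴ) * X * C + Cᴴ * X * (C * C⁻¹) * F * C := by
        rw [lyapunov_apply, hCC, hCC']
        noncomm_ring
    _ = lyapunov (C⁻¹ * F * C) (Cᴴ * X * C) := by
        rw [lyapunov_apply, conjTranspose_mul, conjTranspose_mul]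
        noncomm_ring

theorem inv_mul_lyapunov_mul_inv [DecidableEq n] {Z : Matrix n n 𝕜} (hZ : IsUnit Z)
    (F : Matrix n n 𝕜) :
    Z⁻¹ * lyapunov F Z * Z⁻¹ = lyapunov Fᴴ Z⁻¹ := by
  have hdet : IsUnit Z.det := (isUnit_iff_isUnit_det Z).mp hZ
  calc Z⁻¹ * lyapunov F Z * Z⁻¹ = Z⁻¹ * Fᴴ * (Z * Z⁻¹) + Z⁻¹ * Z * F * Z⁻¹ := by
        rw [lyapunov_apply]
        noncomm_ring
    _ = lyapunov Fᴴ Z⁻¹ := by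
        rw [mul_nonsing_inv Z hdet, nonsing_inv_mul Z hdet, lyapunov_apply,
          conjTranspose_conjTranspose, Matrix.mul_one, Matrix.one_mul, add_comm]

theorem lyapunov_diagonal_apply_self [DecidableEq n] (F : Matrix n n 𝕜) (d : n → 𝕜) (i : n) :
    lyapunov F (diagonal d) i i = d i * lyapunov F 1 i i := by
  simp only [lyapunov_apply, Matrix.add_apply, mul_diagonal, diagonal_mul, Matrix.mul_one,
    Matrix.one_mul]
  ring

theorem exists_conjTranspose_mul_mul_eq_one_and_eq_diagonal [DecidableEq n]
    {X Z : Matrix n n 𝕜} (hX : X.PosDef) (hZ : Z.IsHermitian) :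
    ∃ (C : Matrix n n 𝕜) (d : n → ℝ), IsUnit C ∧ Cᴴ * X * C = 1 ∧
      Cᴴ * Z * C = diagonal fun i ↦ (d i : 𝕜) := by
  open scoped MatrixOrder in
  obtain ⟨S, hS, rfl⟩ :=
    CStarAlgebra.isStrictlyPositive_iff_eq_star_mul_self.mp hX.isStrictlyPositive
  have hSdet : IsUnit S.det := (isUnit_iff_isUnit_det S).mp hS
  have hM : (S⁻¹ᴴ * Z * S⁻¹).IsHermitian := isHermitian_conjTranspose_mul_mul S⁻¹ hZ
  let U : Matrix n n 𝕜 := hM.eigenvectorUnitary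
  have hUU : Uᴴ * U = 1 := Unitary.coe_star_mul_self hM.eigenvectorUnitary
  refine ⟨S⁻¹ * U, hM.eigenvalues,
    (isUnit_nonsing_inv_iff.mpr hS).mul (IsUnit.of_mul_eq_one_right _ hUU), ?_, ?_⟩
  · have hSS : S⁻¹ᴴ * Sᴴ = 1 := by
      rw [← conjTranspose_mul, mul_nonsing_inv S hSdet, conjTranspose_one]
    calc (S⁻¹ * U)ᴴ * (star S * S) * (S⁻¹ * U)
        = Uᴴ * ((S⁻¹ᴴ * Sᴴ) * (S * S⁻¹)) * U := by
          simp only [conjTranspose_mul, star_eq_conjTranspose, Matrix.mul_assoc]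
      _ = 1 := by rw [hSS, mul_nonsing_inv S hSdet, Matrix.mul_one, Matrix.mul_one, hUU]
  · calc (S⁻¹ * U)ᴴ * Z * (S⁻¹ * U) = star U * (S⁻¹ᴴ * Z * S⁻¹) * U := by
          simp only [conjTranspose_mul, star_eq_conjTranspose, Matrix.mul_assoc]
      _ = diagonal fun i ↦ (hM.eigenvalues i : 𝕜) :=
          (Unitary.conjStarAlgAut_star_apply _ _).symm.trans
            hM.conjStarAlgAut_star_eigenvectorUnitary

omit [Fintype n] in
theorem exists_pos_smul_sub_posSemidef [Finite n] {X Z : Matrix n n 𝕜} (hX : X.PosDef)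
    (hZ : Z.IsHermitian) : ∃ c : ℝ, 0 < c ∧ (c • X - Z).PosSemidef := by
  classical
  cases nonempty_fintype n
  obtain ⟨C, d, hC, hCX, hCZ⟩ := exists_conjTranspose_mul_mul_eq_one_and_eq_diagonal hX hZ
  have hd (i : n) : d i ≤ 1 + ∑ j, |d j| := by
    have := Finset.single_le_sum (fun j _ ↦ abs_nonneg (d j)) (Finset.mem_univ i)
    linarith [le_abs_self (d i)]
  refine ⟨1 + ∑ j, |d j|, by positivity, hC.posSemidef_star_left_conjugate_iff.mp ?_⟩
  have hdiag : star C * ((1 + ∑ j, |d j|) • X - Z) * C =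
      diagonal fun i ↦ ((1 + ∑ j, |d j| - d i : ℝ) : 𝕜) := by
    rw [star_eq_conjTranspose, mul_sub, sub_mul, mul_smul_comm, smul_mul_assoc, hCX, hCZ,
      ← diagonal_one, ← diagonal_smul, diagonal_sub]
    congr 1
    ext i
    simp [RCLike.real_smul_eq_coe_mul]
  rw [hdiag, posSemidef_diagonal_iff]
  exact fun i ↦ RCLike.ofReal_nonneg.mpr (sub_nonneg.mpr (hd i))

theorem posSemidef_of_lyapunov {F X Z : Matrix n n 𝕜} (hX : X.PosDef)
    (hFX : (lyapunov F X).PosDef) (hZ : Z.IsHermitian) (hFZ : (lyapunov F Z).PosSemidef) :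
    Z.PosSemidef := by
  classical
  -- In coordinates with `X = 1` and `Z` diagonal, the `i`-th diagonal entries of `lyapunov F Z` and
  -- `lyapunov F X` differ by the factor `d i`.
  obtain ⟨C, d, hC, hCX, hCZ⟩ := exists_conjTranspose_mul_mul_eq_one_and_eq_diagonal hX hZ
  have hone : (lyapunov (C⁻¹ * F * C) 1).PosDef := by
    rw [← hCX, ← conjTranspose_mul_lyapunov_mul hC]
    exact hC.posDef_star_left_conjugate_iff.mpr hFX
  have hdiag : (lyapunov (C⁻¹ * F * C) (diagonal fun i ↦ (d i : 𝕜))).PosSemidef := by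
    rw [← hCZ, ← conjTranspose_mul_lyapunov_mul hC]
    exact hC.posSemidef_star_left_conjugate_iff.mpr hFZ
  refine hC.posSemidef_star_left_conjugate_iff.mp ?_
  rw [star_eq_conjTranspose, hCZ, posSemidef_diagonal_iff]
  intro i
  have hi := hdiag.diag_nonneg (i := i)
  rw [lyapunov_diagonal_apply_self, RCLike.nonneg_iff, RCLike.re_ofReal_mul] at hi
  exact RCLike.ofReal_nonneg.mpr
    (nonneg_of_mul_nonneg_left hi.1 (RCLike.pos_iff.mp hone.diag_pos).1)

open scoped MatrixOrder in
theorem exists_posSemidef_lyapunov_eq {F X M : Matrix n n 𝕜} (hX : X.PosDef)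
    (hFX : (lyapunov F X).PosDef) (hM : M.PosSemidef) :
    ∃ Z : Matrix n n 𝕜, Z.PosSemidef ∧ lyapunov F Z = M := by
  let H : Submodule ℝ (Matrix n n 𝕜) := selfAdjoint.submodule ℝ (Matrix n n 𝕜)
  have hmaps : ∀ Z ∈ H, lyapunov F Z ∈ H := fun Z hZ ↦ isHermitian_lyapunov F hZ
  have hinj : Set.InjOn (lyapunov F) H := by
    refine LinearMap.injOn_of_disjoint_ker subset_rfl (LinearMap.disjoint_ker.mpr fun Z hZ h0 ↦ ?_)
    have hnonneg : 0 ≤ Z := (posSemidef_of_lyapunov hX hFX hZ (h0 ▸ .zero)).nonneg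
    have hnonpos : 0 ≤ -Z := (posSemidef_of_lyapunov hX hFX (H.neg_mem hZ)
      (by rw [map_neg, h0, neg_zero]; exact .zero)).nonneg
    exact le_antisymm (neg_nonneg.mp hnonpos) hnonneg
  obtain ⟨Z, hZ, hFZ⟩ := (LinearMap.injOn_iff_surjOn hmaps).mp hinj hM.isHermitian
  exact ⟨Z, posSemidef_of_lyapunov hX hFX hZ (hFZ ▸ hM), hFZ⟩

theorem exists_pos_posDef_lyapunov_one [DecidableEq n] (F : Matrix n n 𝕜) :
    ∃ c : ℝ, 0 < c ∧ (lyapunov (F + c • 1) 1).PosDef := by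
  obtain ⟨c, hc, hF⟩ := exists_pos_smul_sub_posSemidef (PosDef.one (n := n) (R := 𝕜))
    (isHermitian_lyapunov F isHermitian_one).neg
  refine ⟨c, hc, ?_⟩
  convert! (PosDef.one.smul hc).add_posSemidef hF using 1
  simp only [lyapunov_apply, conjTranspose_add, conjTranspose_smul, conjTranspose_one, star_trivial]
  noncomm_ring

theorem posDef_of_forall_mulVec_eq_zero {X : Matrix n n 𝕜} (hX : X.PosSemidef)
    (h : ∀ v, X *ᵥ v = 0 → v = 0) : X.PosDef :=
  .of_dotProduct_mulVec_pos hX.isHermitian fun v hv ↦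
    (hX.dotProduct_mulVec_nonneg v).lt_of_ne' fun h0 ↦
      hv (h v ((hX.dotProduct_mulVec_zero_iff v).mp h0))

theorem star_vecMul_eq_zero {X : Matrix n n 𝕜} (hX : X.IsHermitian) {v : n → 𝕜}
    (hv : X *ᵥ v = 0) : star v ᵥ* X = 0 := by
  rw [← star_eq_zero, star_vecMul, hX.eq, star_star, hv]

theorem mulVec_eq_zero_of_lyapunov_eq {F Z : Matrix n n 𝕜} {B : Matrix n m 𝕜}
    (hZ : Z.IsHermitian) (h : lyapunov F Z = B * Bᴴ) {v : n → 𝕜} (hv : Z *ᵥ v = 0) :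
    Bᴴ *ᵥ v = 0 ∧ Z *ᵥ (F *ᵥ v) = 0 := by
  have hquad : star v ⬝ᵥ (B * Bᴴ) *ᵥ v = 0 := by
    rw [← h, lyapunov_apply, add_mulVec, ← mulVec_mulVec, ← mulVec_mulVec, hv, mulVec_zero,
      zero_add, dotProduct_mulVec, star_vecMul_eq_zero hZ hv, zero_dotProduct]
  have hBB : (B * Bᴴ) *ᵥ v = 0 :=
    ((posSemidef_self_mul_conjTranspose B).dotProduct_mulVec_zero_iff v).mp hquad
  refine ⟨(self_mul_conjTranspose_mulVec_eq_zero B v).mp hBB, ?_⟩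
  rwa [← h, lyapunov_apply, add_mulVec, ← mulVec_mulVec, ← mulVec_mulVec, hv, mulVec_zero,
    zero_add] at hBB

/-- Controllability of `x' = A x + B u` in its dual form: the orthogonal complement of the reachable
subspace, i.e. of the columns of all `Aᵏ B`, is trivial. -/
def IsControllable [DecidableEq n] (A : Matrix n n 𝕜) (B : Matrix n m 𝕜) : Prop :=
  ∀ v : n → 𝕜, (∀ k : ℕ, Bᴴ *ᵥ (Aᴴ ^ k *ᵥ v) = 0) → v = 0

theorem IsControllable.posDef_of_lyapunov_eq [DecidableEq n] {A : Matrix n n 𝕜} {B : Matrix n m 𝕜}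
    (hAB : IsControllable A B) {c : ℝ} {Z : Matrix n n 𝕜} (hZ : Z.PosSemidef)
    (h : lyapunov (Aᴴ + c • 1) Z = B * Bᴴ) : Z.PosDef := by
  have hker {w : n → 𝕜} (hw : Z *ᵥ w = 0) : Bᴴ *ᵥ w = 0 ∧ Z *ᵥ (Aᴴ *ᵥ w) = 0 := by
    obtain ⟨hBw, hFw⟩ := mulVec_eq_zero_of_lyapunov_eq hZ.isHermitian h hw
    refine ⟨hBw, ?_⟩
    simpa [add_mulVec, mulVec_add, smul_mulVec, mulVec_smul, hw] using hFw
  refine posDef_of_forall_mulVec_eq_zero hZ fun v hv ↦ hAB v fun k ↦ (hker ?_).1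
  induction k with
  | zero => simpa using hv
  | succ k ih =>
    rw [pow_succ', ← mulVec_mulVec]
    exact (hker ih).2

/-- Quadratic stabilizability of `x' = A x + B u`: some feedback `u = K x` admits a positive
definite quadratic form `x ↦ xᴴ X x` that strictly decreases along the closed loop. -/
def IsQuadraticallyStabilizable (A : Matrix n n 𝕜) (B : Matrix n m 𝕜) : Prop :=
  ∃ (K : Matrix m n 𝕜) (X : Matrix n n 𝕜), X.PosDef ∧ (-lyapunov (A + B * K) X).PosDef

theorem IsControllable.isQuadraticallyStabilizable [DecidableEq n] {A : Matrix n n 𝕜}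
    {B : Matrix n m 𝕜} (hAB : IsControllable A B) : IsQuadraticallyStabilizable A B := by
  obtain ⟨c, hc, hF⟩ := exists_pos_posDef_lyapunov_one Aᴴ
  obtain ⟨Z, hZ, hFZ⟩ :=
    exists_posSemidef_lyapunov_eq PosDef.one hF (posSemidef_self_mul_conjTranspose B)
  have hZpos : Z.PosDef := hAB.posDef_of_lyapunov_eq hZ hFZ
  have hinv : Z⁻¹ᴴ = Z⁻¹ := hZpos.inv.isHermitian.eq
  have hopen : Z⁻¹ * (B * Bᴴ) * Z⁻¹ = lyapunov A Z⁻¹ + (c • Z⁻¹ + c • Z⁻¹) := by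
    rw [← hFZ, inv_mul_lyapunov_mul_inv hZpos.isUnit]
    simp only [lyapunov_apply, conjTranspose_add, conjTranspose_smul, conjTranspose_one,
      conjTranspose_conjTranspose, star_trivial]
    noncomm_ring
  have hclosed : -lyapunov (A + B * -(Bᴴ * Z⁻¹)) Z⁻¹ =
      c • Z⁻¹ + c • Z⁻¹ + Z⁻¹ * (B * Bᴴ) * Z⁻¹ := by
    calc -lyapunov (A + B * -(Bᴴ * Z⁻¹)) Z⁻¹
        = Z⁻¹ * (B * Bᴴ) * Z⁻¹ + Z⁻¹ * (B * Bᴴ) * Z⁻¹ - lyapunov A Z⁻¹ := by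
          simp only [lyapunov_apply, conjTranspose_add, conjTranspose_neg, conjTranspose_mul,
            conjTranspose_conjTranspose, hinv, Matrix.mul_neg, Matrix.neg_mul, Matrix.mul_add,
            Matrix.add_mul, Matrix.mul_assoc]
          abel
      _ = c • Z⁻¹ + c • Z⁻¹ + Z⁻¹ * (B * Bᴴ) * Z⁻¹ := by
          nth_rewrite 1 [hopen]
          abel
  refine ⟨-(Bᴴ * Z⁻¹), Z⁻¹, hZpos.inv, ?_⟩
  have hcZ : (c • Z⁻¹).PosDef := hZpos.inv.smul hc
  have hZBZ := (posSemidef_self_mul_conjTranspose B).mul_mul_conjTranspose_same Z⁻¹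
  rw [hinv] at hZBZ
  rw [hclosed]
  exact (hcZ.add hcZ).add_posSemidef hZBZ

/-- The defect of `P` in the algebraic Riccati equation `P G P - Aᴴ P - P A = Q`. With
`G = B R⁻¹ Bᴴ` it vanishes exactly at the solutions; matrices where it is positive semidefinite
serve as supersolutions. -/
def riccatiResidual (A G Q P : Matrix n n 𝕜) : Matrix n n 𝕜 :=
  P * G * P - Aᴴ * P - P * A - Q

theorem lyapunov_eq_riccatiResidual_add (A Q : Matrix n n 𝕜) {G P : Matrix n n 𝕜}
    (hG : G.IsHermitian) (hP : P.IsHermitian) :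
    lyapunov (G * P - A) P = riccatiResidual A G Q P + P * G * P + Q := by
  rw [lyapunov_apply, riccatiResidual, conjTranspose_sub, conjTranspose_mul, hG.eq, hP.eq]
  noncomm_ring

theorem riccatiResidual_sub (A Q D : Matrix n n 𝕜) {G P : Matrix n n 𝕜}
    (hG : G.IsHermitian) (hP : P.IsHermitian) :
    riccatiResidual A G Q (P - D) =
      riccatiResidual A G Q P - lyapunov (G * P - A) D + D * G * D := by
  simp only [lyapunov_apply, riccatiResidual, conjTranspose_sub, conjTranspose_mul, hG.eq, hP.eq]
  noncomm_ring

/-- Completing the square around the gain `-R⁻¹ Bᴴ P`, which the Riccati equation singles out. -/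
theorem riccatiResidual_eq_add_sub [DecidableEq m] {R : Matrix m m 𝕜} (hR : R.IsHermitian)
    (hRunit : IsUnit R) (A Q : Matrix n n 𝕜) (B : Matrix n m 𝕜) (K : Matrix m n 𝕜)
    {P : Matrix n n 𝕜} (hP : P.IsHermitian) :
    riccatiResidual A (B * R⁻¹ * Bᴴ) Q P =
      (R⁻¹ * Bᴴ * P + K)ᴴ * R * (R⁻¹ * Bᴴ * P + K) +
        (-lyapunov (A + B * K) P - (Q + Kᴴ * R * K)) := by
  have hdet : IsUnit R.det := (isUnit_iff_isUnit_det R).mp hRunit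
  have hRE : R * (R⁻¹ * Bᴴ * P + K) = Bᴴ * P + R * K := by
    rw [Matrix.mul_add, Matrix.mul_assoc, mul_nonsing_inv_cancel_left R _ hdet]
  have hER : (R⁻¹ * Bᴴ * P)ᴴ * (R * K) = P * B * K := by
    rw [conjTranspose_mul, conjTranspose_mul, hP.eq, hR.inv.eq, conjTranspose_conjTranspose,
      Matrix.mul_assoc, Matrix.mul_assoc B, nonsing_inv_mul_cancel_left R _ hdet, Matrix.mul_assoc]
  rw [Matrix.mul_assoc _ R, hRE, conjTranspose_add, Matrix.add_mul, Matrix.mul_add, hER]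
  simp only [riccatiResidual, lyapunov_apply, conjTranspose_add, conjTranspose_mul, hP.eq,
    hR.inv.eq, conjTranspose_conjTranspose, Matrix.mul_add, Matrix.add_mul, Matrix.mul_assoc]
  abel

theorem IsQuadraticallyStabilizable.exists_riccatiResidual_posSemidef [DecidableEq m]
    {A : Matrix n n 𝕜} {B : Matrix n m 𝕜} (hAB : IsQuadraticallyStabilizable A B)
    {Q : Matrix n n 𝕜} (hQ : Q.IsHermitian) {R : Matrix m m 𝕜} (hR : R.PosDef) :
    ∃ P : Matrix n n 𝕜, P.PosSemidef ∧ (riccatiResidual A (B * R⁻¹ * Bᴴ) Q P).PosSemidef := by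
  obtain ⟨K, X, hX, hKX⟩ := hAB
  have hKRK : (Kᴴ * R * K).IsHermitian := isHermitian_conjTranspose_mul_mul K hR.isHermitian
  obtain ⟨c, hc, hcQ⟩ := exists_pos_smul_sub_posSemidef hKX (hQ.add hKRK)
  have hcX : (c • X).PosSemidef := hX.posSemidef.smul hc.le
  refine ⟨c • X, hcX, ?_⟩
  rw [riccatiResidual_eq_add_sub hR.isHermitian hR.isUnit A Q B K hcX.isHermitian, map_smul,
    ← smul_neg]
  exact (hR.posSemidef.conjTranspose_mul_mul_same _).add hcQ

theorem posDef_of_riccatiResidual_posSemidef {A G Q P : Matrix n n 𝕜} (hQ : Q.PosDef)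
    (hP : P.PosSemidef) (h : (riccatiResidual A G Q P).PosSemidef) : P.PosDef := by
  refine posDef_of_forall_mulVec_eq_zero hP fun v hv ↦ by_contra fun hv0 ↦ ?_
  have hres : star v ⬝ᵥ riccatiResidual A G Q P *ᵥ v = -(star v ⬝ᵥ Q *ᵥ v) := by
    have hAPv : (Aᴴ * P) *ᵥ v = 0 := by rw [← mulVec_mulVec, hv, mulVec_zero]
    have hPGPv : (P * G * P) *ᵥ v = 0 := by rw [← mulVec_mulVec, hv, mulVec_zero]
    have hPAv : star v ⬝ᵥ (P * A) *ᵥ v = 0 := by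
      rw [← mulVec_mulVec, dotProduct_mulVec, star_vecMul_eq_zero hP.isHermitian hv,
        zero_dotProduct]
    simp [riccatiResidual, sub_mulVec, dotProduct_sub, hAPv, hPGPv, hPAv]
  have hnonneg := h.dotProduct_mulVec_nonneg v
  rw [hres] at hnonneg
  exact (hQ.dotProduct_mulVec_pos hv0).not_ge (neg_nonneg.mp hnonneg)

theorem exists_newton_step {A G Q P : Matrix n n 𝕜} (hG : G.PosSemidef) (hQ : Q.PosDef)
    (hP : P.PosSemidef) (hres : (riccatiResidual A G Q P).PosSemidef) :
    ∃ D : Matrix n n 𝕜, D.PosSemidef ∧ (P - D).PosSemidef ∧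
      lyapunov (G * P - A) D = riccatiResidual A G Q P ∧
      riccatiResidual A G Q (P - D) = D * G * D := by
  have hPpos : P.PosDef := posDef_of_riccatiResidual_posSemidef hQ hP hres
  have hPGP : (P * G * P).PosSemidef := by
    simpa [hP.isHermitian.eq] using hG.mul_mul_conjTranspose_same P
  have hLP := lyapunov_eq_riccatiResidual_add A Q hG.isHermitian hP.isHermitian
  have hLPpos : (lyapunov (G * P - A) P).PosDef := by
    rw [hLP]
    exact hQ.posSemidef_add (hres.add hPGP)
  obtain ⟨D, hD, hLD⟩ := exists_posSemidef_lyapunov_eq hPpos hLPpos hres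
  refine ⟨D, hD, ?_, hLD, ?_⟩
  · refine posSemidef_of_lyapunov hPpos hLPpos (hP.isHermitian.sub hD.isHermitian) ?_
    have hLPD : lyapunov (G * P - A) (P - D) = P * G * P + Q := by
      rw [map_sub, hLP, hLD]
      abel
    rw [hLPD]
    exact hPGP.add hQ.posSemidef
  · rw [riccatiResidual_sub A Q D hG.isHermitian hP.isHermitian, hLD, sub_self, zero_add]

theorem norm_apply_le_re_trace {P : Matrix n n 𝕜} (hP : P.PosSemidef) (i j : n) :
    ‖P i j‖ ≤ RCLike.re P.trace := by
  have hdiag (k : n) : 0 ≤ RCLike.re (P k k) := (RCLike.nonneg_iff.mp hP.diag_nonneg).1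
  have hle (k : n) : RCLike.re (P k k) ≤ RCLike.re P.trace := by
    rw [trace, map_sum]
    exact Finset.single_le_sum (f := fun k ↦ RCLike.re (P k k)) (fun k _ ↦ hdiag k)
      (Finset.mem_univ k)
  have hdet := (hP.submatrix ![i, j]).det_nonneg
  have hminor : ‖P i j‖ ^ 2 ≤ RCLike.re (P i i) * RCLike.re (P j j) := by
    have hji : P j i = star (P i j) := (hP.isHermitian.apply j i).symm
    have him : RCLike.im (P i i) = 0 := (RCLike.nonneg_iff.mp hP.diag_nonneg).2
    rw [det_fin_two, RCLike.nonneg_iff] at hdet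
    simpa [hji, RCLike.mul_conj, him] using hdet.1
  have htr : 0 ≤ RCLike.re P.trace := (hdiag i).trans (hle i)
  refine le_of_sq_le_sq ?_ htr
  calc ‖P i j‖ ^ 2 ≤ RCLike.re (P i i) * RCLike.re (P j j) := hminor
    _ ≤ RCLike.re P.trace * RCLike.re P.trace := mul_le_mul (hle i) (hle j) (hdiag j) htr
    _ = RCLike.re P.trace ^ 2 := (sq _).symm

omit [Fintype n] in
theorem isClosed_setOf_posSemidef : IsClosed {P : Matrix n n 𝕜 | P.PosSemidef} := by
  simp only [PosSemidef, IsHermitian, Finsupp.sum, Set.ofPred_and, Set.ofPred_forall]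
  exact (isClosed_eq (by fun_prop) continuous_id).inter
    (isClosed_iInter fun v ↦ isClosed_le continuous_const (by fun_prop))

theorem isCompact_setOf_posSemidef_re_trace_le (c : ℝ) :
    IsCompact {P : Matrix n n 𝕜 | P.PosSemidef ∧ RCLike.re P.trace ≤ c} := by
  refine (isCompact_closedBall (0 : 𝕜) c).matrix.of_isClosed_subset
    (isClosed_setOf_posSemidef.inter
      (isClosed_le (RCLike.continuous_re.comp continuous_id.matrix_trace) continuous_const)) ?_
  rintro P ⟨hP, hc⟩ i j
  simpa using (norm_apply_le_re_trace hP i j).trans hc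

theorem exists_riccatiResidual_eq_zero {A G Q P₀ : Matrix n n 𝕜} (hG : G.PosSemidef)
    (hQ : Q.PosDef) (hP₀ : P₀.PosSemidef) (hres₀ : (riccatiResidual A G Q P₀).PosSemidef) :
    ∃ P : Matrix n n 𝕜, P.PosDef ∧ riccatiResidual A G Q P = 0 := by
  let S : Set (Matrix n n 𝕜) :=
    {P | P.PosSemidef ∧ RCLike.re P.trace ≤ RCLike.re P₀.trace} ∩
      {P | (riccatiResidual A G Q P).PosSemidef}
  have hS : IsCompact S := (isCompact_setOf_posSemidef_re_trace_le _).inter_right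
    (isClosed_setOf_posSemidef.preimage (by unfold riccatiResidual; fun_prop))
  obtain ⟨P, ⟨⟨hP, htr⟩, hres⟩, hmin⟩ := hS.exists_isMinOn ⟨P₀, ⟨hP₀, le_rfl⟩, hres₀⟩
    (f := fun P ↦ RCLike.re P.trace) (by fun_prop)
  obtain ⟨D, hD, hPD, hLD, hresPD⟩ := exists_newton_step hG hQ hP hres
  have hDtr : 0 ≤ RCLike.re D.trace := (RCLike.nonneg_iff.mp hD.trace_nonneg).1
  have hsub : RCLike.re (P - D).trace = RCLike.re P.trace - RCLike.re D.trace := by simp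
  have hle : RCLike.re P.trace ≤ RCLike.re (P - D).trace := by
    refine hmin ⟨⟨hPD, by linarith⟩, ?_⟩
    rw [Set.mem_ofPred_eq, hresPD]
    simpa [hD.isHermitian.eq] using hG.mul_mul_conjTranspose_same D
  have hD0 : D = 0 := by
    refine hD.trace_eq_zero_iff.mp (le_antisymm ?_ hD.trace_nonneg)
    exact RCLike.nonpos_iff.mpr ⟨by linarith, (RCLike.nonneg_iff.mp hD.trace_nonneg).2⟩
  refine ⟨P, posDef_of_riccatiResidual_posSemidef hQ hP hres, ?_⟩
  rw [← hLD, hD0, map_zero]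

theorem are_solution_exists_general [DecidableEq m] (A : Matrix n n 𝕜) (B : Matrix n m 𝕜)
    (hAB : IsQuadraticallyStabilizable A B) (Q : Matrix n n 𝕜) (R : Matrix m m 𝕜)
    (hQ : Q.PosDef) (hR : R.PosDef) :
    ∃ P : Matrix n n 𝕜, P.PosDef ∧ Q = P * B * R⁻¹ * Bᴴ * P - Aᴴ * P - P * A := by
  obtain ⟨P₀, hP₀, hres₀⟩ := hAB.exists_riccatiResidual_posSemidef hQ.isHermitian hR
  have hG : (B * R⁻¹ * Bᴴ).PosSemidef := hR.inv.posSemidef.mul_mul_conjTranspose_same B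
  obtain ⟨P, hP, hres⟩ := exists_riccatiResidual_eq_zero hG hQ hP₀ hres₀
  refine ⟨P, hP, (sub_eq_zero.mp ?_).symm⟩
  simpa only [riccatiResidual, Matrix.mul_assoc] using hres

end

theorem isControllable_of_rank_ctrbMatrix {n m : ℕ} {A : Matrix (Fin n) (Fin n) ℝ}
    {B : Matrix (Fin n) (Fin m) ℝ} (hctrb : (ctrbMatrix A B).rank = n) : IsControllable A B := by
  intro v hv
  have hrows : LinearIndependent ℝ (ctrbMatrix A B).row := by
    rw [linearIndependent_iff_card_eq_finrank_span, Set.finrank, ← rank_eq_finrank_span_row,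
      hctrb, Fintype.card_fin]
  have hvC : v ᵥ* ctrbMatrix A B = 0 := by
    ext ⟨k, j⟩
    have hkj := congrFun (hv k) j
    rw [mulVec_mulVec, ← conjTranspose_pow, ← conjTranspose_mul,
      conjTranspose_eq_transpose_of_trivial, mulVec_transpose] at hkj
    exact hkj
  exact vecMul_injective_iff.mpr hrows (hvC.trans (zero_vecMul _).symm)

/-- if the pair `(A, B)` is controllable (the controllability matrix has
rank `n`) and `Q`, `R` are symmetric positive definite, then there exists a symmetric
positive definite `P` solving the Algebraic Riccati Equation
`Q = P B R⁻¹ Bᵀ P − Aᵀ P − P A`. -/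
theorem are_solution_exists
    {n m : ℕ} (A : Matrix (Fin n) (Fin n) ℝ) (B : Matrix (Fin n) (Fin m) ℝ)
    (hctrb : (ctrbMatrix A B).rank = n)
    (Q : Matrix (Fin n) (Fin n) ℝ) (R : Matrix (Fin m) (Fin m) ℝ)
    (hQ : Q.PosDef) (hR : R.PosDef) :
    ∃ P : Matrix (Fin n) (Fin n) ℝ, P.PosDef ∧
      Q = P * B * R⁻¹ * Bᵀ * P - Aᵀ * P - P * A :=
  are_solution_exists_general A B
    (isControllable_of_rank_ctrbMatrix hctrb).isQuadraticallyStabilizable Q R hQ hR
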